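/- arXiv:2605.20895 — 6 statements merged into one kernel-verified Lean document; each statement's English description precedes it below -/
import Mathlib

section
/- Let N be a positive integer, h ∈ {1,…,N} with gcd(N,h)=1, and let c: ℝ → ℝ be a 1-periodic continuous function with c(t) = c(1−t) for all t. Suppose (ĉ_N(m))_{m=0}^{N−1} are complex numbers such that c(k/N) = Σ_{m=0}^{N−1} ĉ_N(m) exp(2πi m k/N) for all k = 0,1,…,N−1, and regard ĉ_N as an N-periodic function of its integer argument. Then the tensor product energy of the lattice Λ_{N,h} satisfies E_c(Λ_{N,h}) = N² Σ_{m=0}^{N−1} ĉ_N(m) ĉ_N(hm). -/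
open Real

/-!
Sampling a `1`-periodic potential at the multiples of `1/N` gives a function `f` on `ZMod N`, and
the energy becomes `∑ x y, f (x - y) * f (h * (x - y)) = N * ∑ x, f x * f (h * x)`. Expanding both
factors in additive characters and using orthogonality, only the pairs of frequencies
`(-(h * n), n)` survive, each contributing `N`. For an even potential, the energies for `h` and `-h`
agree.
-/

section FiniteRing

theorem sum_sum_sub {G M : Type*} [AddGroup G] [Fintype G] [AddCommMonoid M] (f : G → M) :
    ∑ x, ∑ y, f (x - y) = Fintype.card G • ∑ x, f x := by
  have hinner (x : G) : ∑ y, f (x - y) = ∑ y, f y := (Equiv.subLeft x).sum_comp f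
  simp only [hinner, Finset.sum_const, Finset.card_univ]

variable {R S : Type*} [CommRing R] [Fintype R] [CommRing S] [IsDomain S] {ψ : AddChar R S}

theorem sum_addChar_mul_addChar_dilate [DecidableEq R] (hψ : ψ.IsPrimitive) (h m n : R) :
    ∑ x, ψ (m * x) * ψ (n * (h * x)) = if m = -(h * n) then (Fintype.card R : S) else 0 := by
  calc ∑ x, ψ (m * x) * ψ (n * (h * x)) = ∑ x, ψ (x * (m + h * n)) :=
        Finset.sum_congr rfl fun x _ ↦ by rw [← AddChar.map_add_eq_mul]; ring_nf
    _ = if m = -(h * n) then (Fintype.card R : S) else 0 := by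
        simp only [AddChar.sum_mulShift _ hψ, ← eq_neg_iff_add_eq_zero, Nat.cast_ite, Nat.cast_zero]

theorem sum_mul_dilate_of_addChar_expansion (hψ : ψ.IsPrimitive) {f g a b : R → S}
    (hf : ∀ x, f x = ∑ m, a m * ψ (m * x)) (hg : ∀ x, g x = ∑ n, b n * ψ (n * x)) (h : R) :
    ∑ x, f x * g (h * x) = Fintype.card R * ∑ n, a (-(h * n)) * b n := by
  classical
  calc ∑ x, f x * g (h * x)
      = ∑ x, ∑ n, ∑ m, a m * b n * (ψ (m * x) * ψ (n * (h * x))) := by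
        simp only [hf, hg, Finset.sum_mul_sum, mul_mul_mul_comm]
        exact Finset.sum_congr rfl fun x _ ↦ Finset.sum_comm
    _ = ∑ n, ∑ m, a m * b n * ∑ x, ψ (m * x) * ψ (n * (h * x)) := by
        simp only [Finset.mul_sum]
        rw [Finset.sum_comm]
        exact Finset.sum_congr rfl fun n _ ↦ Finset.sum_comm
    _ = ∑ n, a (-(h * n)) * b n * Fintype.card R := by
        simp only [sum_addChar_mul_addChar_dilate hψ, mul_ite, mul_zero, Finset.sum_ite_eq',
          Finset.mem_univ, if_true]
    _ = Fintype.card R * ∑ n, a (-(h * n)) * b n := by rw [← Finset.sum_mul, mul_comm]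

end FiniteRing

section Periodic

theorem sum_range_natCast_zmod {M : Type*} [AddCommMonoid M] (N : ℕ) [NeZero N] (F : ZMod N → M) :
    ∑ k ∈ Finset.range N, F k = ∑ x, F x :=
  Finset.sum_nbij' (fun k ↦ (k : ZMod N)) ZMod.val (fun _ _ ↦ Finset.mem_univ _)
    (fun x _ ↦ Finset.mem_range.mpr x.val_lt)
    (fun _ hk ↦ ZMod.val_cast_of_lt (Finset.mem_range.mp hk))
    (fun x _ ↦ ZMod.natCast_zmod_val x) (fun _ _ ↦ rfl)

variable {α : Type*}

theorem periodic_cast_intCast_zmod {a : ℤ → α} {N : ℕ} (ha : Function.Periodic a N) (m : ℤ) :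
    a (m : ZMod N).cast = a m := by
  rw [ZMod.coe_intCast, Int.emod_def, mul_comm]
  exact ha.sub_int_mul_eq _

theorem periodic_fract_sub_fract {K : Type*} [Ring K] [LinearOrder K] [FloorRing K] {c : K → α}
    (hc : Function.Periodic c 1) (x y : K) : c (Int.fract x - Int.fract y) = c (x - y) := by
  have hfloor : Int.fract x - Int.fract y = x - y - (⌊x⌋ - ⌊y⌋) • (1 : K) := by
    rw [zsmul_one, Int.cast_sub, Int.fract, Int.fract]
    abel
  rw [hfloor, hc.sub_zsmul_eq]

theorem even_of_periodic_of_reflection {G : Type*} [AddCommGroup G] {p : G} {c : G → α}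
    (hper : Function.Periodic c p) (hsym : ∀ t, c t = c (p - t)) : Function.Even c := fun t ↦ by
  rw [hsym (-t), sub_neg_eq_add, add_comm, hper]

theorem periodic_lift_toAddCircle_intCast {c : ℝ → α} (hc : Function.Periodic c 1) (N : ℕ)
    [NeZero N] (j : ℤ) : hc.lift (ZMod.toAddCircle (j : ZMod N)) = c (j / N) := by
  rw [ZMod.toAddCircle_intCast, hc.lift_coe]

end Periodic

/-- The tensor product energy of the lattice `Λ_{N,h}` for the potential `c`, as a sum over the
indices `k` and `l` of the lattice points. The multiplier `h` may be any integer. -/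
noncomputable def latticeEnergy (c : ℝ → ℂ) (N : ℕ) (h : ℤ) : ℂ :=
  ∑ k ∈ Finset.range N, ∑ l ∈ Finset.range N,
    c ((k : ℝ) / N - (l : ℝ) / N) *
      c (Int.fract ((h * k : ℝ) / N) - Int.fract ((h * l : ℝ) / N))

section LatticeEnergy

variable {c : ℝ → ℂ} {N : ℕ}

theorem latticeEnergy_neg (hper : Function.Periodic c 1) (heven : Function.Even c) (h : ℤ) :
    latticeEnergy c N (-h) = latticeEnergy c N h := by
  refine Finset.sum_congr rfl fun k _ ↦ Finset.sum_congr rfl fun l _ ↦ ?_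
  rw [periodic_fract_sub_fract hper, periodic_fract_sub_fract hper,
    ← heven (h * k / N - h * l / N)]
  congr 2
  push_cast
  ring

variable [NeZero N]

theorem latticeEnergy_eq_sum_zmod (hper : Function.Periodic c 1) (h : ℤ) :
    latticeEnergy c N h = ∑ x : ZMod N, ∑ y : ZMod N,
      hper.lift (ZMod.toAddCircle (x - y)) *
        hper.lift (ZMod.toAddCircle ((h : ZMod N) * (x - y))) := by
  simp only [latticeEnergy, ← sum_range_natCast_zmod]
  refine Finset.sum_congr rfl fun k _ ↦ Finset.sum_congr rfl fun l _ ↦ ?_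
  have hfst : (k : ZMod N) - l = ((k - l : ℤ) : ZMod N) := by push_cast; rfl
  have hsnd : (h : ZMod N) * (k - l) = ((h * (k - l) : ℤ) : ZMod N) := by push_cast; rfl
  rw [hsnd, hfst, periodic_lift_toAddCircle_intCast, periodic_lift_toAddCircle_intCast,
    periodic_fract_sub_fract hper]
  congr 2 <;> push_cast <;> ring

theorem lift_toAddCircle_eq_sum_stdAddChar (hper : Function.Periodic c 1) {chat : ℤ → ℂ}
    (hdft : ∀ k : ℕ, k < N →
      c ((k : ℝ) / N) = ∑ m ∈ Finset.range N,
        chat m * Complex.exp (2 * (π : ℂ) * Complex.I * (m : ℂ) * (k : ℂ) / (N : ℂ)))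
    (x : ZMod N) :
    hper.lift (ZMod.toAddCircle x) = ∑ m : ZMod N, chat m.cast * ZMod.stdAddChar (m * x) := by
  rw [← ZMod.natCast_zmod_val x, ← Int.cast_natCast x.val, periodic_lift_toAddCircle_intCast,
    Int.cast_natCast, hdft x.val x.val_lt, ← sum_range_natCast_zmod]
  refine Finset.sum_congr rfl fun m hm ↦ ?_
  have hchar : ZMod.stdAddChar ((m : ZMod N) * ((x.val : ℤ) : ZMod N)) =
      Complex.exp (2 * (π : ℂ) * Complex.I * m * x.val / N) := by
    rw [← Int.cast_natCast m, ← Int.cast_mul, ZMod.stdAddChar_coe]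
    push_cast
    ring_nf
  rw [hchar, ZMod.cast_eq_val, ZMod.val_cast_of_lt (Finset.mem_range.mp hm)]

end LatticeEnergy

theorem tensor_product_energy_of_lattice_general {c : ℝ → ℂ} {N : ℕ} [NeZero N]
    (hper : Function.Periodic c 1) {chat : ℤ → ℂ} (hchatper : Function.Periodic chat N)
    (hdft : ∀ k : ℕ, k < N →
      c ((k : ℝ) / N) = ∑ m ∈ Finset.range N,
        chat m * Complex.exp (2 * (π : ℂ) * Complex.I * (m : ℂ) * (k : ℂ) / (N : ℂ)))
    (h : ℤ) :
    latticeEnergy c N h = (N : ℂ) ^ 2 * ∑ m ∈ Finset.range N, chat m * chat (-h * m) := by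
  have hexp := lift_toAddCircle_eq_sum_stdAddChar hper hdft
  have hcast (m : ℕ) : chat (-((h : ZMod N) * m)).cast * chat (m : ZMod N).cast =
      chat m * chat (-h * m) := by
    have hneg : -((h : ZMod N) * m) = ((-h * m : ℤ) : ZMod N) := by push_cast; ring
    rw [hneg, periodic_cast_intCast_zmod hchatper, mul_comm, ← Int.cast_natCast m,
      periodic_cast_intCast_zmod hchatper]
  rw [latticeEnergy_eq_sum_zmod hper,
    sum_sum_sub fun x : ZMod N ↦
      hper.lift (ZMod.toAddCircle x) * hper.lift (ZMod.toAddCircle ((h : ZMod N) * x)),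
    sum_mul_dilate_of_addChar_expansion (ZMod.isPrimitive_stdAddChar N) hexp hexp,
    ← sum_range_natCast_zmod, ZMod.card, nsmul_eq_mul, ← mul_assoc, ← sq]
  simp only [hcast]

/-- Tensor product energy of the lattice `Λ_{N,h} = {(k/N, {hk/N}) : k = 0,…,N−1}`
expressed via the discrete Fourier coefficients of the potential `c`. -/
theorem tensor_product_energy_of_lattice
    (N : ℕ) (hN : 0 < N) (h : ℕ) (hh1 : 1 ≤ h) (hhN : h ≤ N)
    (hgcd : Nat.gcd N h = 1)
    (c : ℝ → ℝ) (hc : Continuous c)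
    (hper : ∀ t : ℝ, c (t + 1) = c t)
    (hsym : ∀ t : ℝ, c t = c (1 - t))
    (chat : ℤ → ℂ) (hchatper : ∀ m : ℤ, chat (m + N) = chat m)
    (hdft : ∀ k : ℕ, k < N →
      (c ((k : ℝ) / N) : ℂ) =
        ∑ m ∈ Finset.range N,
          chat m * Complex.exp (2 * (π : ℂ) * Complex.I * (m : ℂ) * (k : ℂ) / (N : ℂ))) :
    ((∑ k ∈ Finset.range N, ∑ l ∈ Finset.range N,
        c ((k : ℝ) / N - (l : ℝ) / N) *
          c (Int.fract ((h * k : ℝ) / N) - Int.fract ((h * l : ℝ) / N)) : ℝ) : ℂ) =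
      (N : ℂ) ^ 2 * ∑ m ∈ Finset.range N, chat m * chat (h * m) := by
  have : NeZero N := ⟨hN.ne'⟩
  have hper' : Function.Periodic (fun t ↦ (c t : ℂ)) 1 := fun t ↦ congrArg _ (hper t)
  have heven := even_of_periodic_of_reflection hper' fun t ↦ congrArg _ (hsym t)
  simpa [latticeEnergy] using (latticeEnergy_neg hper' heven h).symm.trans
    (tensor_product_energy_of_lattice_general hper' hchatper hdft (-h))
end

section
/- For every positive integer i, the real number η_i = −w_+(i)w_−(i) is a positive integer, and for every integer k ≥ 2 it holds that η_i = (−1)^k ( W_{i,k}² − W_{i,k} W_{i,k−1} − W_{i,k−1}² ). -/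
open Real

noncomputable def phi : ℝ := (1 + Real.sqrt 5) / 2

noncomputable def W (i : ℕ) : ℕ → ℤ
  | 0 => ⌊phi ^ 2 * (⌊phi * i⌋ : ℝ)⌋ - ⌊phi * (⌊phi * i⌋ : ℝ)⌋
  | 1 => ⌊phi * (⌊phi * i⌋ : ℝ)⌋
  | 2 => ⌊phi ^ 2 * (⌊phi * i⌋ : ℝ)⌋
  | (k + 3) => W i (k + 2) + W i (k + 1)

noncomputable def wplus (i : ℕ) : ℝ := phi⁻¹ ^ 2 * (W i 1 : ℝ) + phi⁻¹ * (W i 2 : ℝ)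

noncomputable def wminus (i : ℕ) : ℝ := phi ^ 2 * (W i 1 : ℝ) - phi * (W i 2 : ℝ)

noncomputable def eta (i : ℕ) : ℝ := -(wplus i * wminus i)

/-!
In `ℤ[φ]`, multiplication by `φ` sends `x + y φ` to `y + (x + y) φ`, so
`W_{i,k} + W_{i,k+1} φ = φ ^ k (W_{i,0} + W_{i,1} φ)`. As `φ` has norm `-1`, the norm
`x² + x y - y²` only changes sign from one column to the next.

Up to the mutually inverse factors `φ⁻²` and `φ²`, the numbers `w₊(i)` and `w₋(i)` are
`W_{i,1} + W_{i,2} φ` and its conjugate, so `η_i` is minus the norm of this element, which is the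
norm of `n + ⌊φ n⌋ φ` with `n = W_{i,0} = ⌊φ i⌋`. That norm is positive since
`⌊φ n⌋ < φ n` by irrationality of `φ`, which makes the conjugate positive.
-/

section PowersOfOmega

open scoped QuadraticAlgebra

variable {R : Type*} [CommRing R] {a b : R} {u : ℕ → R}

lemma omega_pow_mul_mk_of_recurrence (hu : ∀ n, u (n + 2) = b * u (n + 1) + a * u n) (n : ℕ) :
    ω ^ n * (⟨a * u 0, u 1⟩ : QuadraticAlgebra R a b) = ⟨a * u n, u (n + 1)⟩ := by
  induction n with
  | zero => rw [pow_zero, one_mul]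
  | succ n ih =>
    rw [pow_succ', mul_assoc, ih, QuadraticAlgebra.omega_mul_mk, hu, add_comm (a * u n)]

lemma norm_omega : (ω : QuadraticAlgebra R a b).norm = -a := by
  simp [QuadraticAlgebra.norm_def]

lemma norm_mk_of_recurrence (hu : ∀ n, u (n + 2) = b * u (n + 1) + a * u n) (n : ℕ) :
    (⟨a * u n, u (n + 1)⟩ : QuadraticAlgebra R a b).norm =
      (-a) ^ n * (⟨a * u 0, u 1⟩ : QuadraticAlgebra R a b).norm := by
  rw [← omega_pow_mul_mk_of_recurrence hu, map_mul, map_pow, norm_omega]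

end PowersOfOmega

/-- The ring `ℤ[φ]`, in which `⟨x, y⟩` stands for `x + y φ`. -/
abbrev GoldenInt : Type := QuadraticAlgebra ℤ 1 1

namespace GoldenInt

lemma norm_mk (x y : ℤ) : (⟨x, y⟩ : GoldenInt).norm = x ^ 2 + x * y - y ^ 2 := by
  rw [QuadraticAlgebra.norm_def]
  ring

lemma norm_mk_eq_mul (x y : ℤ) :
    ((⟨x, y⟩ : GoldenInt).norm : ℝ) = (x + goldenRatio * y) * (x + goldenConj * y) := by
  rw [norm_mk]
  push_cast
  linear_combination
    -(x * y : ℝ) * goldenRatio_add_goldenConj - (y ^ 2 : ℝ) * goldenRatio_mul_goldenConj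

lemma norm_mk_pos {x y : ℤ} (hx : 0 < x) (hy : 0 ≤ y) (hyx : (y : ℝ) < goldenRatio * x) :
    0 < (⟨x, y⟩ : GoldenInt).norm := by
  have hφ := goldenRatio_pos
  have value_pos : 0 < x + goldenRatio * y := by positivity
  have conj_pos : 0 < x + goldenConj * y := by
    refine pos_of_mul_pos_right ?_ hφ.le
    calc
      0 < goldenRatio * x - y := sub_pos.mpr hyx
      _ = goldenRatio * (x + goldenConj * y) := by
        linear_combination -(y : ℝ) * goldenRatio_mul_goldenConj
  have norm_pos : (0 : ℝ) < (⟨x, y⟩ : GoldenInt).norm := by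
    rw [norm_mk_eq_mul]
    exact mul_pos value_pos conj_pos
  exact_mod_cast norm_pos

lemma norm_mk_floor_pos {n : ℤ} (hn : 0 < n) :
    0 < (⟨n, ⌊goldenRatio * n⌋⟩ : GoldenInt).norm := by
  have floor_nonneg : 0 ≤ ⌊goldenRatio * n⌋ := Int.floor_nonneg.mpr (by positivity)
  have floor_lt : (⌊goldenRatio * n⌋ : ℝ) < goldenRatio * n :=
    (Int.floor_le _).lt_of_ne' ((goldenRatio_irrational.mul_intCast hn.ne').ne_int _)
  exact norm_mk_pos hn floor_nonneg floor_lt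

end GoldenInt

lemma phi_eq_goldenRatio : phi = goldenRatio := rfl

lemma W_zero (i : ℕ) : W i 0 = ⌊goldenRatio * i⌋ := by
  simp only [W, phi_eq_goldenRatio]
  rw [goldenRatio_sq, add_one_mul, Int.floor_add_intCast, add_sub_cancel_left]

lemma W_one (i : ℕ) : W i 1 = ⌊goldenRatio * W i 0⌋ := by
  rw [W_zero, W, phi_eq_goldenRatio]

lemma W_add_two (i k : ℕ) : W i (k + 2) = W i (k + 1) + W i k := by
  cases k with
  | zero => simp only [W, add_sub_cancel]
  | succ k => rw [W]

lemma W_zero_pos {i : ℕ} (hi : 0 < i) : 0 < W i 0 := by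
  have one_le : (1 : ℝ) ≤ i := by exact_mod_cast hi
  rw [W_zero, Int.floor_pos]
  exact one_le_mul_of_one_le_of_one_le one_lt_goldenRatio.le one_le

lemma norm_mk_W (i k : ℕ) :
    (⟨W i k, W i (k + 1)⟩ : GoldenInt).norm =
      (-1) ^ k * (⟨W i 0, W i 1⟩ : GoldenInt).norm := by
  simpa only [one_mul] using
    norm_mk_of_recurrence (a := 1) (b := 1) (u := W i) (by simpa only [one_mul] using W_add_two i) k

lemma wplus_eq_inv_sq_mul (i : ℕ) :
    wplus i = goldenRatio⁻¹ ^ 2 * (W i 1 + goldenRatio * W i 2) := by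
  rw [wplus, phi_eq_goldenRatio]
  field_simp

lemma wminus_eq_sq_mul (i : ℕ) : wminus i = goldenRatio ^ 2 * (W i 1 + goldenConj * W i 2) := by
  rw [wminus, phi_eq_goldenRatio]
  linear_combination -(goldenRatio * W i 2) * goldenRatio_mul_goldenConj

lemma eta_eq_norm (i : ℕ) : eta i = (⟨W i 0, W i 1⟩ : GoldenInt).norm := by
  have scale_cancel : goldenRatio⁻¹ ^ 2 * goldenRatio ^ 2 = 1 := by
    rw [← mul_pow, inv_mul_cancel₀ goldenRatio_ne_zero, one_pow]
  calc
    eta i = -((goldenRatio⁻¹ ^ 2 * goldenRatio ^ 2) *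
        ((W i 1 + goldenRatio * W i 2) * (W i 1 + goldenConj * W i 2))) := by
      rw [eta, wplus_eq_inv_sq_mul, wminus_eq_sq_mul]
      ring
    _ = -((⟨W i 1, W i 2⟩ : GoldenInt).norm : ℝ) := by
      rw [scale_cancel, one_mul, GoldenInt.norm_mk_eq_mul]
    _ = (⟨W i 0, W i 1⟩ : GoldenInt).norm := by
      rw [norm_mk_W i 1]
      push_cast
      ring

lemma eta_eq_neg_one_pow_mul (i k : ℕ) :
    eta i = (-1) ^ (k + 1) *
      ((W i (k + 1) : ℝ) ^ 2 - W i (k + 1) * W i k - (W i k : ℝ) ^ 2) := by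
  have norm_eq : (⟨W i 0, W i 1⟩ : GoldenInt).norm =
      (-1) ^ k * (⟨W i k, W i (k + 1)⟩ : GoldenInt).norm := by
    rw [norm_mk_W i k, ← mul_assoc, ← mul_pow, neg_one_mul, neg_neg, one_pow, one_mul]
  rw [eta_eq_norm, norm_eq, GoldenInt.norm_mk]
  push_cast
  ring

/-- `η_i = −w₊(i)w₋(i)` is a positive integer and for every `k ≥ 2` it equals
`(−1)^k (W_{i,k}² − W_{i,k}W_{i,k−1} − W_{i,k−1}²)`. -/
theorem eta_pos_int_and_formula (i : ℕ) (hi : 0 < i) :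
    (∃ m : ℕ, 0 < m ∧ eta i = (m : ℝ)) ∧
      ∀ k : ℕ, 2 ≤ k →
        eta i = (-1 : ℝ) ^ k *
          (((W i k : ℝ)) ^ 2 - (W i k : ℝ) * (W i (k - 1) : ℝ) - ((W i (k - 1) : ℝ)) ^ 2) := by
  refine ⟨?_, fun k hk ↦ ?_⟩
  · have norm_pos : 0 < (⟨W i 0, W i 1⟩ : GoldenInt).norm := by
      rw [W_one]
      exact GoldenInt.norm_mk_floor_pos (W_zero_pos hi)
    obtain ⟨m, hm⟩ := Int.eq_ofNat_of_zero_le norm_pos.le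
    refine ⟨m, by omega, ?_⟩
    rw [eta_eq_norm, hm, Int.cast_natCast]
  · obtain ⟨j, rfl⟩ := Nat.exists_eq_add_of_le' (Nat.one_le_of_lt hk)
    exact eta_eq_neg_one_pow_mul i j
end

section
/- For every positive integer ℓ it holds that ⌊ φ·F_{3ℓ}/2 + φ^{−1} ⌋ = (F_{3ℓ+1}+1)/2. -/
open Real

/-!
Write `ψ = -φ⁻¹` for the conjugate of `φ`. Since `φ F_n = F_{n+1} - ψ^n`, the number under the
floor is `F_{n+1} / 2 - (ψ^n / 2 + ψ)`. For `n ≠ 0` the correction `ψ^n / 2 + ψ` lies in `(-1, 0)`,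
so the floor is `F_{n+1} / 2` if `F_{n+1}` is even. If `F_{n+1}` is odd, then `n ≠ 2`, hence
`ψ^n ≤ -ψ^3 = -2ψ - 1`, the correction is at most `-1/2`, and the floor is `(F_{n+1} + 1) / 2`.
-/

open scoped goldenRatio

theorem goldenConj_cube : ψ ^ 3 = 2 * ψ + 1 := by
  linear_combination (ψ + 1) * goldenConj_sq

theorem neg_two_thirds_lt_goldenConj : -(2 / 3) < ψ := by
  nlinarith [goldenConj_sq, goldenConj_neg]

theorem abs_goldenConj_pow_le_abs_pow {m n : ℕ} (hmn : m ≤ n) : |ψ ^ n| ≤ |ψ ^ m| := by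
  have habs : |ψ| ≤ 1 := abs_le.mpr ⟨neg_one_lt_goldenConj.le, goldenConj_neg.le.trans zero_le_one⟩
  simpa only [abs_pow] using pow_le_pow_of_le_one (abs_nonneg ψ) habs hmn

theorem goldenConj_pow_half_add_mem_Ioo {n : ℕ} (hn : n ≠ 0) : ψ ^ n / 2 + ψ ∈ Set.Ioo (-1) 0 := by
  have hψ : ψ < 0 := goldenConj_neg
  have habs : |ψ ^ n| ≤ -ψ := by
    simpa only [pow_one, abs_of_neg hψ] using
      abs_goldenConj_pow_le_abs_pow (Nat.one_le_iff_ne_zero.mpr hn)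
  obtain ⟨hlower, hupper⟩ := abs_le.mp habs
  constructor <;> linarith [neg_two_thirds_lt_goldenConj]

theorem goldenConj_pow_le_neg_cube {n : ℕ} (hn₀ : n ≠ 0) (hn₂ : n ≠ 2) : ψ ^ n ≤ -ψ ^ 3 := by
  have hcube : ψ ^ 3 < 0 := Odd.pow_neg (by decide) goldenConj_neg
  obtain rfl | hn : n = 1 ∨ 3 ≤ n := by omega
  · linarith [goldenConj_neg, pow_one ψ]
  · calc
      ψ ^ n ≤ |ψ ^ n| := le_abs_self _
      _ ≤ |ψ ^ 3| := abs_goldenConj_pow_le_abs_pow hn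
      _ = -ψ ^ 3 := abs_of_neg hcube

theorem goldenConj_pow_half_add_le_neg_half {n : ℕ} (hn₀ : n ≠ 0) (hn₂ : n ≠ 2) :
    ψ ^ n / 2 + ψ ≤ -(1 / 2) := by
  linarith [goldenConj_pow_le_neg_cube hn₀ hn₂, goldenConj_cube]

theorem phi_mul_fib_half_add_inv (n : ℕ) :
    phi * (Nat.fib n : ℝ) / 2 + phi⁻¹ = (Nat.fib (n + 1) : ℝ) / 2 - (ψ ^ n / 2 + ψ) := by
  have hphi : phi = φ := rfl
  rw [hphi, inv_goldenRatio]
  linear_combination -(fib_succ_sub_goldenRatio_mul_fib n) / 2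

theorem odd_fib_succ_of_three_dvd {n : ℕ} (hn : 3 ∣ n) : Odd (Nat.fib (n + 1)) :=
  Nat.coprime_two_left.mp ((Nat.fib_coprime_fib_succ n).of_dvd_left (Nat.fib_dvd 3 n hn))

theorem floor_phi_half_fib_general {n : ℕ} (hn : n ≠ 0) :
    ⌊phi * (Nat.fib n : ℝ) / 2 + phi⁻¹⌋ = ((Nat.fib (n + 1) : ℤ) + 1) / 2 := by
  obtain ⟨hlower, hupper⟩ := goldenConj_pow_half_add_mem_Ioo hn
  rw [phi_mul_fib_half_add_inv]
  obtain ⟨k, hk⟩ | ⟨k, hk⟩ := Nat.even_or_odd (Nat.fib (n + 1))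
  · have hceil : ((Nat.fib (n + 1) : ℤ) + 1) / 2 = k := by omega
    have hfib : (Nat.fib (n + 1) : ℝ) = k + k := mod_cast hk
    rw [hceil, Int.floor_eq_iff, Int.cast_natCast]
    constructor <;> linarith
  · have hn₂ : n ≠ 2 := by
      rintro rfl
      exact absurd ⟨k, hk⟩ (by decide : ¬Odd (Nat.fib 3))
    have hhalf : ψ ^ n / 2 + ψ ≤ -(1 / 2) := goldenConj_pow_half_add_le_neg_half hn hn₂
    have hceil : ((Nat.fib (n + 1) : ℤ) + 1) / 2 = k + 1 := by omega
    have hfib : (Nat.fib (n + 1) : ℝ) = 2 * k + 1 := mod_cast hk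
    rw [hceil, Int.floor_eq_iff]
    push_cast
    constructor <;> linarith

/-- `⌊φ·F_{3ℓ}/2 + φ⁻¹⌋ = (F_{3ℓ+1}+1)/2` for every `ℓ ≥ 1`. -/
theorem floor_phi_half_fib (ℓ : ℕ) (hℓ : 0 < ℓ) :
    2 * ⌊phi * (Nat.fib (3 * ℓ) : ℝ) / 2 + phi⁻¹⌋ = (Nat.fib (3 * ℓ + 1) : ℤ) + 1 := by
  have heven : Even ((Nat.fib (3 * ℓ + 1) : ℤ) + 1) :=
    mod_cast (odd_fib_succ_of_three_dvd (dvd_mul_right 3 ℓ)).add_one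
  rw [floor_phi_half_fib_general (by omega), Int.two_mul_ediv_two_of_even heven]
end

section
/- For every positive integer i there exists a positive integer μ_i such that for all positive integers n and k it holds that W_{i,k} < F_n/2 if and only if n − k > μ_i. -/
open Real

/-!
As `φ` is irrational, the first two columns of the Wythoff array satisfy
`φ W_{i,1} < W_{i,2} < φ W_{i,1} + φ⁻¹`, while `F_{n+1} = φ F_n + ψ ^ n`. All the numbers being
integers, these estimates are sharp enough to give `2 W_{i,1} < F_n ↔ 2 W_{i,2} < F_{n+1}`. Rows and
Fibonacci numbers obey the same recurrence, so this propagates to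
`2 W_{i,k+1} < F_{n+k} ↔ 2 W_{i,1} < F_n`. Hence `μ_i + 1` is the index of the largest Fibonacci
number not exceeding `2 W_{i,1}`.
-/

open scoped goldenRatio

theorem lt_iff_lt_zero_of_add_rec {M : Type*} [AddCommMonoid M] [LinearOrder M]
    [IsOrderedCancelAddMonoid M] {u v : ℕ → M}
    (hu : ∀ k, u (k + 2) = u k + u (k + 1)) (hv : ∀ k, v (k + 2) = v k + v (k + 1))
    (h : u 0 < v 0 ↔ u 1 < v 1) (k : ℕ) : u k < v k ↔ u 0 < v 0 := by
  induction k using Nat.twoStepInduction with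
  | zero => rfl
  | one => exact h.symm
  | more k ih ih' =>
    rw [hu, hv]
    by_cases h₀ : u 0 < v 0
    · exact iff_of_true (add_lt_add (ih.2 h₀) (ih'.2 h₀)) h₀
    · exact iff_of_false
        (add_le_add (not_lt.1 (mt ih.1 h₀)) (not_lt.1 (mt ih'.1 h₀))).not_gt h₀

theorem floor_goldenRatio_mul_pos {m : ℤ} (hm : 0 < m) : 0 < ⌊φ * m⌋ := by
  have hm' : (1 : ℝ) ≤ m := by exact_mod_cast hm
  exact Int.floor_pos.2 (one_le_mul_of_one_le_of_one_le one_lt_goldenRatio.le hm')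

theorem fract_goldenRatio_mul_pos {m : ℤ} (hm : m ≠ 0) : 0 < Int.fract (φ * m) :=
  Int.fract_pos.2 ((goldenRatio_irrational.mul_intCast hm).ne_int _)

theorem floor_goldenRatio_sq_mul (m : ℤ) :
    (⌊φ ^ 2 * m⌋ : ℝ) = φ * ⌊φ * m⌋ + φ⁻¹ * Int.fract (φ * m) := by
  have hfloor : ⌊φ ^ 2 * m⌋ = ⌊φ * m⌋ + m := by
    rw [goldenRatio_sq, add_one_mul, Int.floor_add_intCast]
  rw [hfloor, Int.fract, inv_goldenRatio, ← one_sub_goldenRatio]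
  push_cast
  linear_combination -(m : ℝ) * goldenRatio_sq

theorem abs_goldenConj_lt_one : |ψ| < 1 :=
  abs_lt.2 ⟨neg_one_lt_goldenConj, goldenConj_neg.trans one_pos⟩

theorem neg_goldenConj_sq_le_pow {n : ℕ} (hn : n ≠ 1) : -ψ ^ 2 ≤ ψ ^ n := by
  obtain rfl | hn2 : n = 0 ∨ 2 ≤ n := by lia
  · nlinarith [sq_nonneg ψ]
  · have habs : |ψ ^ n| ≤ ψ ^ 2 := by
      rw [abs_pow, ← sq_abs ψ]
      exact pow_le_pow_of_le_one (abs_nonneg ψ) abs_goldenConj_lt_one.le hn2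
    exact neg_le_of_abs_le habs

section

variable {a b : ℤ}

theorem fib_succ_le_two_mul (hab : φ * a < b) {n : ℕ} (h : (Nat.fib n : ℤ) ≤ 2 * a) :
    (Nat.fib (n + 1) : ℤ) ≤ 2 * b := by
  have h' : (Nat.fib n : ℝ) ≤ 2 * a := by exact_mod_cast h
  have hpow : ψ ^ n ≤ 1 := (le_abs_self _).trans <| by
    rw [abs_pow]
    exact pow_le_one₀ (abs_nonneg ψ) abs_goldenConj_lt_one.le
  have hlt : (Nat.fib (n + 1) : ℝ) < 2 * b + 1 := by
    calc (Nat.fib (n + 1) : ℝ) = φ * Nat.fib n + ψ ^ n := by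
          rw [← fib_succ_sub_goldenRatio_mul_fib]; ring
      _ ≤ φ * (2 * a) + 1 := by gcongr
      _ < 2 * b + 1 := by linarith
  exact Int.lt_add_one_iff.1 (by exact_mod_cast hlt)

theorem two_mul_lt_fib_succ (hba : b < φ * a + φ⁻¹) {n : ℕ} (h : 2 * a < Nat.fib n) :
    2 * b < Nat.fib (n + 1) := by
  obtain rfl | hn := eq_or_ne n 1
  -- Here `ψ ^ n + ψ ^ 2` is negative, so the estimate of the other case is not available.
  · have ha : (a : ℝ) ≤ 0 := by
      norm_num at h
      exact_mod_cast (by lia : a ≤ 0)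
    have hb : (b : ℝ) < 1 := by
      calc (b : ℝ) < φ * a + φ⁻¹ := hba
        _ ≤ φ⁻¹ := by linarith [mul_nonpos_of_nonneg_of_nonpos goldenRatio_pos.le ha]
        _ < 1 := inv_lt_one_of_one_lt₀ one_lt_goldenRatio
    have hb' : b < 1 := by exact_mod_cast hb
    norm_num
    lia
  · have h' : 2 * (a : ℝ) ≤ Nat.fib n - 1 := by exact_mod_cast Int.le_sub_one_of_lt h
    have hlt : 2 * (b : ℝ) < Nat.fib (n + 1) := by
      calc 2 * (b : ℝ) < φ * (2 * a) + 2 * φ⁻¹ := by linarith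
        _ ≤ φ * (Nat.fib n - 1) + 2 * φ⁻¹ := by gcongr
        _ = Nat.fib (n + 1) - (ψ ^ n + ψ ^ 2) := by
          rw [← fib_succ_sub_goldenRatio_mul_fib, inv_goldenRatio, goldenConj_sq,
            ← one_sub_goldenConj]
          ring
        _ ≤ Nat.fib (n + 1) := by linarith [neg_goldenConj_sq_le_pow hn]
    exact_mod_cast hlt

theorem two_mul_lt_fib_iff_two_mul_lt_fib_succ (hab : φ * a < b) (hba : b < φ * a + φ⁻¹) (n : ℕ) :
    2 * a < Nat.fib n ↔ 2 * b < Nat.fib (n + 1) :=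
  ⟨two_mul_lt_fib_succ hba, lt_imp_lt_of_le_imp_le (fib_succ_le_two_mul hab)⟩

end

theorem two_mul_lt_fib_add_iff {G : ℕ → ℤ} (hG : ∀ k, G (k + 2) = G k + G (k + 1))
    (hlo : φ * G 0 < G 1) (hhi : G 1 < φ * G 0 + φ⁻¹) (n k : ℕ) :
    2 * G k < Nat.fib (n + k) ↔ 2 * G 0 < Nat.fib n := by
  refine lt_iff_lt_zero_of_add_rec (u := fun k ↦ 2 * G k) (v := fun k ↦ (Nat.fib (n + k) : ℤ))
    (fun k ↦ ?_) (fun k ↦ ?_) (two_mul_lt_fib_iff_two_mul_lt_fib_succ hlo hhi n) k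
  · rw [hG, mul_add]
  · exact_mod_cast Nat.fib_add_two

theorem two_mul_lt_fib_iff_greatestFib_add_lt {G : ℕ → ℤ}
    (hG : ∀ k, G (k + 2) = G k + G (k + 1)) (hlo : φ * G 0 < G 1) (hhi : G 1 < φ * G 0 + φ⁻¹)
    (h₀ : 0 ≤ G 0) (n k : ℕ) :
    2 * G k < Nat.fib n ↔ Nat.greatestFib (2 * G 0).toNat + k < n := by
  have hiff := two_mul_lt_fib_add_iff hG hlo hhi
  obtain hkn | hnk := le_or_gt k n
  · obtain ⟨d, rfl⟩ := Nat.exists_eq_add_of_le' hkn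
    rw [hiff, Nat.add_lt_add_iff_right, Nat.greatestFib_lt]
    lia
  · have hfib : (Nat.fib n : ℤ) ≤ Nat.fib (0 + k) := by
      exact_mod_cast Nat.fib_mono (by lia)
    have hle : (Nat.fib (0 + k) : ℤ) ≤ 2 * G k :=
      not_lt.1 (mt (hiff 0 k).1 (by simpa using h₀))
    exact iff_of_false (hfib.trans hle).not_gt (by lia)

theorem W_add_three (i k : ℕ) : W i (k + 3) = W i (k + 1) + W i (k + 2) :=
  add_comm _ _

-- `phi` is definitionally `Real.goldenRatio`, so lemmas about the latter apply to `W` as they are.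
theorem W_one_pos {i : ℕ} (hi : 0 < i) : 0 < W i 1 :=
  floor_goldenRatio_mul_pos (floor_goldenRatio_mul_pos (m := i) (mod_cast hi))

theorem W_two_eq_goldenRatio_mul_add (i : ℕ) :
    (W i 2 : ℝ) = φ * W i 1 + φ⁻¹ * Int.fract (φ * ⌊φ * i⌋) :=
  floor_goldenRatio_sq_mul _

theorem goldenRatio_mul_W_one_lt_W_two {i : ℕ} (hi : 0 < i) : φ * W i 1 < W i 2 := by
  have hm : ⌊φ * i⌋ ≠ 0 := (floor_goldenRatio_mul_pos (m := i) (mod_cast hi)).ne'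
  rw [W_two_eq_goldenRatio_mul_add]
  exact lt_add_of_pos_right _ (mul_pos (inv_pos.2 goldenRatio_pos) (fract_goldenRatio_mul_pos hm))

theorem W_two_lt_goldenRatio_mul_W_one_add (i : ℕ) : W i 2 < φ * W i 1 + φ⁻¹ := by
  rw [W_two_eq_goldenRatio_mul_add]
  gcongr
  exact mul_lt_of_lt_one_right (inv_pos.2 goldenRatio_pos) (Int.fract_lt_one _)

/-- For every `i` there is a positive integer `μ_i` with
`W_{i,k} < F_n/2 ↔ n − k > μ_i` for all positive `n, k`. -/
theorem exists_mu (i : ℕ) (hi : 0 < i) :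
    ∃ μ : ℕ, 0 < μ ∧ ∀ n k : ℕ, 0 < n → 0 < k →
      (2 * W i k < (Nat.fib n : ℤ) ↔ (μ : ℤ) < (n : ℤ) - (k : ℤ)) := by
  have hpos : 0 < W i 1 := W_one_pos hi
  have hge : 3 ≤ Nat.greatestFib (2 * W i 1).toNat :=
    Nat.le_greatestFib.2 (show 2 ≤ _ by lia)
  refine ⟨Nat.greatestFib (2 * W i 1).toNat - 1, by lia, fun n k _ hk ↦ ?_⟩
  obtain ⟨j, rfl⟩ := Nat.exists_eq_add_of_le' hk
  rw [two_mul_lt_fib_iff_greatestFib_add_lt (G := fun j ↦ W i (j + 1)) (W_add_three i)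
    (goldenRatio_mul_W_one_lt_W_two hi) (W_two_lt_goldenRatio_mul_W_one_add i) hpos.le]
  lia
end

section
/- For all integers n ≥ 2 it holds that s_{1,3}(1, F_{n−1}; F_n) = (−1)^n s_{3,1}(1, F_{n−1}; F_n) = L_{3n}/(1500 F_n³) + (−1)^n n/(50 F_n²) − (−1)^n · 13 L_n/(750 F_n³). -/
open Real

def lucas : ℕ → ℕ
  | 0 => 2
  | 1 => 1
  | (n + 2) => lucas (n + 1) + lucas n

/-- The first Bernoulli polynomial. -/
noncomputable def B1 (t : ℝ) : ℝ := t - 1 / 2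

/-- The third Bernoulli polynomial. -/
noncomputable def B3 (t : ℝ) : ℝ := t ^ 3 - (3 / 2) * t ^ 2 + (1 / 2) * t

/-- Generalized Dedekind sum `s_{g,h}(a,b;c) = Σ_{k=0}^{c−1} g({ak/c}) h({bk/c})`. -/
noncomputable def dedekindSum (g h : ℝ → ℝ) (a b c : ℕ) : ℝ :=
  ∑ k ∈ Finset.range c, g (Int.fract ((a * k : ℝ) / c)) * h (Int.fract ((b * k : ℝ) / c))

/-!
The symmetry holds because Cassini's identity gives `F_{n-1}² ≡ (-1)ⁿ` modulo `F_n`: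
multiplying the summation variable by `F_{n-1}` swaps the two arguments of the Dedekind sum up to
this sign, which the odd periodic function `B₃ ∘ fract` pulls out.

The closed form follows by induction on `n` from Apostol's reciprocity law relating
`s_{1,3}(1, h; c)` and `s_{1,3}(1, c; h)`, since `F_{n+1} ≡ F_{n-1}` modulo `F_n`. To prove the law,
sum `(hk + cj)(hk - cj)²` over the lattice points of `[0, c) × [0, h)`. The summand vanishes on the
diagonal `hk = cj`, so the sum splits into two triangles. On each of them the difference equation
`Bₙ(x + 1) - Bₙ(x) = n xⁿ⁻¹` makes the inner sums telescope to Bernoulli polynomials in the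
fractional part `{hk/c}`, respectively `{cj/h}`; those of degree three assemble into the Dedekind
sum and those of degree four are summed by the multiplication theorem.
-/

section PowerSums

variable {K : Type*} [Field K] [CharZero K]

lemma sum_range_natCast (n : ℕ) : ∑ k ∈ Finset.range n, (k : K) = n * (n - 1) / 2 := by
  induction n with
  | zero => simp
  | succ n ih =>
    rw [Finset.sum_range_succ, ih]
    push_cast
    ring

lemma sum_range_natCast_sq (n : ℕ) :
    ∑ k ∈ Finset.range n, (k : K) ^ 2 = n * (n - 1) * (2 * n - 1) / 6 := by
  induction n with
  | zero => simp
  | succ n ih =>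
    rw [Finset.sum_range_succ, ih]
    push_cast
    ring

lemma sum_range_natCast_cube (n : ℕ) :
    ∑ k ∈ Finset.range n, (k : K) ^ 3 = n ^ 2 * (n - 1) ^ 2 / 4 := by
  induction n with
  | zero => simp
  | succ n ih =>
    rw [Finset.sum_range_succ, ih]
    push_cast
    ring

lemma sum_range_natCast_pow_four (n : ℕ) :
    ∑ k ∈ Finset.range n, (k : K) ^ 4
      = n * (n - 1) * (2 * n - 1) * (3 * n ^ 2 - 3 * n - 1) / 30 := by
  induction n with
  | zero => simp
  | succ n ih =>
    rw [Finset.sum_range_succ, ih]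
    push_cast
    ring

end PowerSums

section Bernoulli

lemma bernoulli_three : bernoulli 3 = 0 :=
  bernoulli_eq_zero_of_odd (by decide) (by norm_num)

lemma bernoulli_four : bernoulli 4 = -1 / 30 := by
  rw [bernoulli_eq_bernoulli'_of_ne_one (by norm_num), bernoulli'_four]

lemma bernoulliFun_three (x : ℝ) :
    bernoulliFun 3 x = x ^ 3 - 3 / 2 * x ^ 2 + 1 / 2 * x := by
  simp [bernoulliFun, Polynomial.bernoulli_def, Finset.sum_range_succ, bernoulli_three, Nat.choose]
  ring

lemma bernoulliFun_four (x : ℝ) :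
    bernoulliFun 4 x = x ^ 4 - 2 * x ^ 3 + x ^ 2 - 1 / 30 := by
  simp [bernoulliFun, Polynomial.bernoulli_def, Finset.sum_range_succ, bernoulli_three,
    bernoulli_four, Nat.choose]
  ring

lemma B3_eq_bernoulliFun : B3 = bernoulliFun 3 :=
  funext fun x => (bernoulliFun_three x).symm

lemma bernoulliFun_add_one (n : ℕ) (x : ℝ) :
    bernoulliFun n (x + 1) = bernoulliFun n x + n * x ^ (n - 1) := by
  simpa [bernoulliFun, Polynomial.aeval_comp, add_comm]
    using congr_arg (·.aeval x) (Polynomial.bernoulli_comp_one_add_X n)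

lemma sum_range_sub_natCast_pow (n m : ℕ) (x : ℝ) :
    ∑ j ∈ Finset.range m, (x - j) ^ n
      = (bernoulliFun (n + 1) (x + 1) - bernoulliFun (n + 1) (x + 1 - m)) / (n + 1) := by
  induction m with
  | zero => simp
  | succ m ih =>
    have hstep := bernoulliFun_add_one (n + 1) (x - m)
    rw [show x - m + 1 = x + 1 - m by ring] at hstep
    rw [Finset.sum_range_succ, ih, hstep, show x + 1 - (m + 1 : ℕ) = x - m by push_cast; ring]
    field_simp
    push_cast [Nat.add_sub_cancel]
    ring

lemma sum_range_floor_sub_natCast_pow (n : ℕ) {x : ℝ} (hx : 0 ≤ x) :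
    ∑ j ∈ Finset.range (⌊x⌋₊ + 1), (x - j) ^ n
      = (bernoulliFun (n + 1) (x + 1) - bernoulliFun (n + 1) (Int.fract x)) / (n + 1) := by
  rw [sum_range_sub_natCast_pow, Int.fract, ← natCast_floor_eq_intCast_floor hx]
  push_cast
  rw [add_sub_add_right_eq_sub]

lemma sum_range_bernoulliFun_div (n : ℕ) {c : ℕ} (hc : c ≠ 0) :
    ∑ k ∈ Finset.range c, bernoulliFun n (k / c) = c * bernoulli n / c ^ n := by
  have h := bernoulliFun_mul n hc 0
  simp only [mul_zero, zero_add, bernoulliFun_eval_zero] at h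
  rw [h]
  field_simp

lemma B3_fract_neg (x : ℝ) : B3 (Int.fract (-x)) = -B3 (Int.fract x) := by
  by_cases hx : Int.fract x = 0
  · simp [Int.fract_neg_eq_zero.mpr hx, hx, B3]
  · rw [Int.fract_neg hx, B3_eq_bernoulliFun, bernoulliFun_eval_one_sub]
    ring

end Bernoulli

section DedekindSum

lemma sum_range_mul_mod {M : Type*} [AddCommMonoid M] {u c : ℕ} (hu : u.Coprime c) (f : ℕ → M) :
    ∑ k ∈ Finset.range c, f (u * k % c) = ∑ k ∈ Finset.range c, f k := by
  have hmaps : Set.MapsTo (fun k => u * k % c) (Finset.range c) (Finset.range c) := fun k hk =>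
    Finset.mem_coe.mpr <| Finset.mem_range.mpr <|
      Nat.mod_lt _ (Nat.zero_lt_of_lt (Finset.mem_range.mp hk))
  have hinj : Set.InjOn (fun k => u * k % c) (Finset.range c) := fun a ha b hb hab =>
    Nat.ModEq.eq_of_lt_of_lt (Nat.ModEq.cancel_left_of_coprime hu.symm hab)
      (Finset.mem_range.mp ha) (Finset.mem_range.mp hb)
  exact Finset.sum_nbij _ hmaps hinj
    (Finset.surjOn_of_injOn_of_card_le _ hmaps hinj le_rfl) fun _ _ => rfl

variable {g : ℝ → ℝ} {b c u : ℕ}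

lemma dedekindSum_eq_sum_mod (f g : ℝ → ℝ) (a b c : ℕ) :
    dedekindSum f g a b c
      = ∑ k ∈ Finset.range c, f ((a * k % c : ℕ) / c) * g ((b * k % c : ℕ) / c) := by
  simp only [dedekindSum, ← Int.fract_div_natCast_eq_div_natCast_mod, Nat.cast_mul]

lemma dedekindSum_comm (f g : ℝ → ℝ) (a b c : ℕ) :
    dedekindSum f g a b c = dedekindSum g f b a c :=
  Finset.sum_congr rfl fun _ _ => mul_comm _ _

lemma dedekindSum_congr_right (f g : ℝ → ℝ) (a : ℕ) {b b' : ℕ} (h : b ≡ b' [MOD c]) :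
    dedekindSum f g a b c = dedekindSum f g a b' c := by
  have hmod (k : ℕ) : b * k % c = b' * k % c := h.mul_right k
  simp only [dedekindSum_eq_sum_mod, hmod]

lemma dedekindSum_mul_mul (f g : ℝ → ℝ) (a b : ℕ) (hu : u.Coprime c) :
    dedekindSum f g (u * a) (u * b) c = dedekindSum f g a b c := by
  rw [dedekindSum_eq_sum_mod f g a b, ← sum_range_mul_mod hu, dedekindSum_eq_sum_mod]
  simp only [Nat.mul_mod_mod, mul_left_comm, mul_assoc]

lemma dedekindSum_neg_right (f : ℝ → ℝ) (hg : ∀ x, g (Int.fract (-x)) = -g (Int.fract x))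
    (a : ℕ) {b b' : ℕ} (h : c ∣ b + b') :
    dedekindSum f g a b' c = -dedekindSum f g a b c := by
  obtain ⟨d, hd⟩ := h
  rw [dedekindSum, dedekindSum, ← Finset.sum_neg_distrib]
  refine Finset.sum_congr rfl fun k hk => ?_
  have hc : (c : ℝ) ≠ 0 := Nat.cast_ne_zero.mpr (Nat.ne_zero_of_lt (Finset.mem_range.mp hk))
  have hfract : Int.fract (b' * k / c : ℝ) = Int.fract (-(b * k / c) : ℝ) := by
    refine Int.fract_eq_fract.mpr ⟨d * k, ?_⟩
    have hd' : (b + b' : ℝ) = c * d := mod_cast hd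
    field_simp
    push_cast
    linear_combination k * hd'
  rw [hfract, hg, mul_neg]

lemma dedekindSum_eq_swap_of_mul_self_modEq_one (f g : ℝ → ℝ) (h : b * b ≡ 1 [MOD c]) :
    dedekindSum f g 1 b c = dedekindSum g f 1 b c := by
  rw [← dedekindSum_mul_mul f g 1 b (Nat.coprime_of_mul_modEq_one b h), mul_one,
    dedekindSum_congr_right f g b h, dedekindSum_comm]

lemma dedekindSum_eq_neg_swap_of_dvd_mul_self_add_one (f : ℝ → ℝ)
    (hg : ∀ x, g (Int.fract (-x)) = -g (Int.fract x)) (h : c ∣ b * b + 1) :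
    dedekindSum f g 1 b c = -dedekindSum g f 1 b c := by
  have hb : b.Coprime c := Nat.Coprime.coprime_dvd_right h (by simp)
  rw [← dedekindSum_mul_mul f g 1 b hb, mul_one,
    dedekindSum_neg_right f hg b (add_comm (b * b) 1 ▸ h), dedekindSum_comm]

end DedekindSum

section Reciprocity

variable {h c : ℕ}

lemma sum_bernoulliFun_fract_mul_div (n : ℕ) (hc : c ≠ 0) (hcop : h.Coprime c) :
    ∑ k ∈ Finset.range c, bernoulliFun n (Int.fract (h * k / c : ℝ))
      = c * bernoulli n / c ^ n := by
  simp only [← Nat.cast_mul, Int.fract_div_natCast_eq_div_natCast_mod]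
  rw [sum_range_mul_mod hcop fun k => bernoulliFun n (k / c), sum_range_bernoulliFun_div n hc]

lemma dedekindSum_B1_B3_eq_sum_div_mul (hc : c ≠ 0) (hcop : h.Coprime c) :
    dedekindSum B1 B3 1 h c
      = ∑ k ∈ Finset.range c, (k / c : ℝ) * B3 (Int.fract (h * k / c : ℝ)) := by
  have hzero : ∑ k ∈ Finset.range c, B3 (Int.fract (h * k / c : ℝ)) = 0 := by
    rw [B3_eq_bernoulliFun, sum_bernoulliFun_fract_mul_div 3 hc hcop, bernoulli_three]
    simp
  have hfract : ∀ k ∈ Finset.range c, Int.fract ((1 : ℕ) * k / c : ℝ) = k / c := fun k hk => by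
    rw [Nat.cast_one, one_mul, Int.fract_div_natCast_eq_div_natCast_mod,
      Nat.mod_eq_of_lt (Finset.mem_range.mp hk)]
  calc dedekindSum B1 B3 1 h c
      = ∑ k ∈ Finset.range c, (k / c - 1 / 2 : ℝ) * B3 (Int.fract (h * k / c : ℝ)) :=
        Finset.sum_congr rfl fun k hk => by rw [hfract k hk, B1]
    _ = _ := by
        simp only [sub_mul, Finset.sum_sub_distrib, ← Finset.mul_sum, hzero, mul_zero, sub_zero]

lemma filter_mul_le_mul_eq_range {k : ℕ} (hh : 0 < h) (hk : k < c) :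
    (Finset.range h).filter (fun j => c * j ≤ h * k) = Finset.range (h * k / c + 1) := by
  ext j
  rw [Finset.mem_filter, Finset.mem_range, Finset.mem_range, Nat.lt_succ_iff,
    Nat.le_div_iff_mul_le (Nat.zero_lt_of_lt hk), mul_comm j c, and_iff_right_iff_imp]
  intro hj
  refine Nat.lt_of_mul_lt_mul_left (a := c) ?_
  calc c * j ≤ h * k := hj
    _ < h * c := Nat.mul_lt_mul_of_pos_left hk hh
    _ = c * h := mul_comm h c

lemma sum_rectangle_eq_sum_triangles {M : Type*} [AddCommMonoid M] (hh : 0 < h) (hc : 0 < c)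
    (f : ℕ → ℕ → M) (hdiag : ∀ k j, h * k = c * j → f k j = 0) :
    ∑ k ∈ Finset.range c, ∑ j ∈ Finset.range h, f k j
      = ∑ k ∈ Finset.range c, ∑ j ∈ Finset.range (h * k / c + 1), f k j
        + ∑ j ∈ Finset.range h, ∑ k ∈ Finset.range (c * j / h + 1), f k j := by
  have hsplit (k j : ℕ) :
      f k j = (if c * j ≤ h * k then f k j else 0) + if h * k ≤ c * j then f k j else 0 := by
    rcases lt_trichotomy (h * k) (c * j) with hlt | heq | hgt
    · simp [hlt.le, hlt.not_ge]
    · simp [hdiag k j heq]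
    · simp [hgt.le, hgt.not_ge]
  calc _ = ∑ k ∈ Finset.range c, ∑ j ∈ Finset.range h, (if c * j ≤ h * k then f k j else 0)
        + ∑ j ∈ Finset.range h, ∑ k ∈ Finset.range c, if h * k ≤ c * j then f k j else 0 := by
        rw [Finset.sum_comm (s := Finset.range h)]
        simp only [← Finset.sum_add_distrib, ← hsplit]
    _ = _ := by
        simp only [← Finset.sum_filter]
        congr 1
        · exact Finset.sum_congr rfl fun k hk => by
            rw [filter_mul_le_mul_eq_range hh (Finset.mem_range.mp hk)]
        · exact Finset.sum_congr rfl fun j hj => by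
            rw [filter_mul_le_mul_eq_range hc (Finset.mem_range.mp hj)]

lemma sum_range_floor_add_mul_sub_sq {x : ℝ} (hx : 0 ≤ x) :
    ∑ j ∈ Finset.range (⌊x⌋₊ + 1), (x + j) * (x - j) ^ 2
      = 5 / 12 * x ^ 4 + 1 / 2 * x ^ 3 + 1 / 12 * x ^ 2 + 1 / 120
        - 2 / 3 * x * B3 (Int.fract x) + 1 / 4 * bernoulliFun 4 (Int.fract x) := by
  calc ∑ j ∈ Finset.range (⌊x⌋₊ + 1), (x + j) * (x - j) ^ 2
      = 2 * x * ∑ j ∈ Finset.range (⌊x⌋₊ + 1), (x - j) ^ 2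
          - ∑ j ∈ Finset.range (⌊x⌋₊ + 1), (x - j) ^ 3 := by
        rw [Finset.mul_sum, ← Finset.sum_sub_distrib]
        exact Finset.sum_congr rfl fun j _ => by ring
    _ = _ := by
        rw [sum_range_floor_sub_natCast_pow 2 hx, sum_range_floor_sub_natCast_pow 3 hx,
          B3_eq_bernoulliFun, bernoulliFun_three (x + 1), bernoulliFun_four (x + 1)]
        push_cast
        ring

lemma sum_triangle_add_mul_sub_sq (hc : c ≠ 0) (hcop : h.Coprime c) :
    ∑ k ∈ Finset.range c, ∑ j ∈ Finset.range (h * k / c + 1),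
        (h * k + c * j : ℝ) * (h * k - c * j) ^ 2
      = -(2 / 3) * h * c ^ 3 * dedekindSum B1 B3 1 h c
        + h ^ 4 * (c - 1) * (2 * c - 1) * (3 * c ^ 2 - 3 * c - 1) / 72
        + h ^ 3 * c ^ 2 * (c - 1) ^ 2 / 8 + h ^ 2 * c ^ 2 * (c - 1) * (2 * c - 1) / 72
        + (c ^ 4 - 1) / 120 := by
  have hc' : (c : ℝ) ≠ 0 := Nat.cast_ne_zero.mpr hc
  have hinner (k : ℕ) : ∑ j ∈ Finset.range (h * k / c + 1),
      (h * k + c * j : ℝ) * (h * k - c * j) ^ 2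
        = 5 / 12 * h ^ 4 / c * k ^ 4 + 1 / 2 * h ^ 3 * k ^ 3 + 1 / 12 * h ^ 2 * c * k ^ 2
          + c ^ 3 / 120 - 2 / 3 * h * c ^ 3 * (k / c * B3 (Int.fract (h * k / c : ℝ)))
          + c ^ 3 / 4 * bernoulliFun 4 (Int.fract (h * k / c : ℝ)) := by
    have hfloor : h * k / c = ⌊(h * k / c : ℝ)⌋₊ := by
      rw [← Nat.cast_mul, Nat.floor_div_eq_div]
    calc _ = c ^ 3 * ∑ j ∈ Finset.range (⌊(h * k / c : ℝ)⌋₊ + 1),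
            (h * k / c + j : ℝ) * (h * k / c - j) ^ 2 := by
          rw [hfloor, Finset.mul_sum]
          exact Finset.sum_congr rfl fun j _ => by field_simp
      _ = _ := by
          rw [sum_range_floor_add_mul_sub_sq (by positivity)]
          field_simp
  simp only [hinner, Finset.sum_add_distrib, Finset.sum_sub_distrib, ← Finset.mul_sum,
    sum_range_natCast_pow_four, sum_range_natCast_cube, sum_range_natCast_sq, Finset.sum_const,
    Finset.card_range, nsmul_eq_mul, ← dedekindSum_B1_B3_eq_sum_div_mul hc hcop,
    sum_bernoulliFun_fract_mul_div 4 hc hcop, bernoulli_four]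
  push_cast
  field_simp
  ring

lemma sum_rectangle_add_mul_sub_sq (h c : ℕ) :
    ∑ k ∈ Finset.range c, ∑ j ∈ Finset.range h, (h * k + c * j : ℝ) * (h * k - c * j) ^ 2
      = h ^ 4 * c ^ 2 * (c - 1) ^ 2 / 4 + h ^ 2 * c ^ 4 * (h - 1) ^ 2 / 4
        - h ^ 3 * c ^ 2 * (c - 1) * (2 * c - 1) * (h - 1) / 12
        - h ^ 2 * c ^ 3 * (h - 1) * (2 * h - 1) * (c - 1) / 12 := by
  have hexpand (k j : ℕ) : (h * k + c * j : ℝ) * (h * k - c * j) ^ 2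
      = h ^ 3 * k ^ 3 + c ^ 3 * j ^ 3 - h ^ 2 * c * k ^ 2 * j - h * c ^ 2 * k * j ^ 2 := by
    ring
  simp only [hexpand, Finset.sum_add_distrib, Finset.sum_sub_distrib, ← Finset.mul_sum,
    ← Finset.sum_mul, sum_range_natCast_cube, sum_range_natCast_sq, sum_range_natCast,
    Finset.sum_const, Finset.card_range, nsmul_eq_mul]
  ring

theorem dedekindSum_B1_B3_reciprocity (hh : h ≠ 0) (hc : c ≠ 0) (hcop : h.Coprime c) :
    h * c ^ 3 * dedekindSum B1 B3 1 h c + c * h ^ 3 * dedekindSum B1 B3 1 c h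
      = -(h ^ 4 + c ^ 4) / 120 + h ^ 2 * c ^ 2 / 24 - 1 / 40 := by
  have hsplit := sum_rectangle_eq_sum_triangles hh.pos hc.pos
    (fun k j => (h * k + c * j : ℝ) * (h * k - c * j) ^ 2) fun k j hkj => by
      have : (h * k : ℝ) = c * j := mod_cast hkj
      simp [this]
  have hswap : ∑ j ∈ Finset.range h, ∑ k ∈ Finset.range (c * j / h + 1),
      (h * k + c * j : ℝ) * (h * k - c * j) ^ 2
        = ∑ j ∈ Finset.range h, ∑ k ∈ Finset.range (c * j / h + 1),
          (c * j + h * k : ℝ) * (c * j - h * k) ^ 2 :=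
    Finset.sum_congr rfl fun j _ => Finset.sum_congr rfl fun k _ => by ring
  rw [hswap, sum_rectangle_add_mul_sub_sq, sum_triangle_add_mul_sub_sq hc hcop,
    sum_triangle_add_mul_sub_sq hh hcop.symm] at hsplit
  linear_combination 3 / 2 * hsplit

end Reciprocity

section FibonacciLucas

open scoped goldenRatio

lemma lucas_eq_goldenRatio_pow_add (n : ℕ) : (lucas n : ℝ) = φ ^ n + ψ ^ n := by
  induction n using Nat.twoStepInduction with
  | zero => norm_num [lucas]
  | one => simp [lucas]
  | more n ih₀ ih₁ =>
    rw [lucas, Nat.cast_add, ih₀, ih₁]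
    linear_combination -φ ^ n * goldenRatio_sq - ψ ^ n * goldenConj_sq

lemma goldenRatio_pow_mul_goldenConj_pow (n : ℕ) : φ ^ n * ψ ^ n = (-1) ^ n := by
  rw [← mul_pow, goldenRatio_mul_goldenConj]

lemma lucas_three_mul (n : ℕ) : (lucas (3 * n) : ℝ) = lucas n ^ 3 - 3 * (-1) ^ n * lucas n := by
  simp only [lucas_eq_goldenRatio_pow_add, ← goldenRatio_pow_mul_goldenConj_pow, mul_comm 3 n,
    pow_mul]
  ring

lemma lucas_eq_two_mul_fib_succ_sub_fib (n : ℕ) :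
    (lucas n : ℝ) = 2 * Nat.fib (n + 1) - Nat.fib n := by
  rw [lucas_eq_goldenRatio_pow_add]
  linear_combination -fib_succ_sub_goldenRatio_mul_fib n - fib_succ_sub_goldenConj_mul_fib n
    - Nat.fib n * goldenRatio_add_goldenConj

lemma fib_succ_sq_sub_mul_sub_sq {R : Type*} [CommRing R] (n : ℕ) :
    (Nat.fib (n + 1) : R) ^ 2 - Nat.fib n * Nat.fib (n + 1) - (Nat.fib n : R) ^ 2 = (-1) ^ n := by
  induction n with
  | zero => simp
  | succ n ih =>
    rw [pow_succ (-1), ← ih, Nat.fib_add_two]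
    push_cast
    ring

lemma fib_mul_self_modEq_one {n : ℕ} (hn : Odd n) :
    Nat.fib n * Nat.fib n ≡ 1 [MOD Nat.fib (n + 1)] := by
  have hcassini := fib_succ_sq_sub_mul_sub_sq (R := ℤ) n
  rw [hn.neg_one_pow] at hcassini
  refine Nat.modEq_iff_dvd.mpr ⟨Nat.fib n - Nat.fib (n + 1), ?_⟩
  push_cast
  linear_combination hcassini

lemma fib_succ_dvd_fib_mul_self_add_one {n : ℕ} (hn : Even n) :
    Nat.fib (n + 1) ∣ Nat.fib n * Nat.fib n + 1 := by
  have hcassini := fib_succ_sq_sub_mul_sub_sq (R := ℤ) n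
  rw [hn.neg_one_pow] at hcassini
  refine Int.natCast_dvd_natCast.mp ⟨Nat.fib (n + 1) - Nat.fib n, ?_⟩
  push_cast
  linear_combination -hcassini

end FibonacciLucas

theorem dedekindSum_fib_swap (f : ℝ → ℝ) {g : ℝ → ℝ}
    (hg : ∀ x, g (Int.fract (-x)) = -g (Int.fract x)) (n : ℕ) :
    dedekindSum f g 1 (Nat.fib n) (Nat.fib (n + 1))
      = (-1) ^ (n + 1) * dedekindSum g f 1 (Nat.fib n) (Nat.fib (n + 1)) := by
  rcases n.even_or_odd with hn | hn
  · rw [dedekindSum_eq_neg_swap_of_dvd_mul_self_add_one f hg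
      (fib_succ_dvd_fib_mul_self_add_one hn), hn.add_one.neg_one_pow, neg_one_mul]
  · rw [dedekindSum_eq_swap_of_mul_self_modEq_one f g (fib_mul_self_modEq_one hn),
      hn.add_one.neg_one_pow, one_mul]

lemma dedekindSum_fib_add_two (f g : ℝ → ℝ) (n : ℕ) :
    dedekindSum f g 1 (Nat.fib (n + 2)) (Nat.fib (n + 1))
      = dedekindSum f g 1 (Nat.fib n) (Nat.fib (n + 1)) :=
  dedekindSum_congr_right f g 1 (by simp [Nat.fib_add_two, Nat.ModEq])

theorem dedekindSum_B1_B3_fib (n : ℕ) :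
    1500 * (Nat.fib (n + 1) : ℝ) ^ 3 * dedekindSum B1 B3 1 (Nat.fib n) (Nat.fib (n + 1))
      = lucas (3 * (n + 1)) + 30 * (-1) ^ (n + 1) * (n + 1) * Nat.fib (n + 1)
        - 26 * (-1) ^ (n + 1) * lucas (n + 1) := by
  induction n with
  | zero => norm_num [dedekindSum, B3, lucas]
  | succ n ih =>
    have hx : Nat.fib (n + 1) ≠ 0 := by simp
    have hrec := dedekindSum_B1_B3_reciprocity hx (by simp) (Nat.fib_coprime_fib_succ (n + 1))
    rw [dedekindSum_fib_add_two] at hrec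
    have hfib : (Nat.fib (n + 3) : ℝ) = Nat.fib (n + 1) + Nat.fib (n + 2) :=
      mod_cast Nat.fib_add_two
    have hcassini := fib_succ_sq_sub_mul_sub_sq (R := ℝ) (n + 1)
    have hsign : ((-1 : ℝ) ^ (n + 1)) ^ 2 = 1 := by rw [← pow_mul', Even.neg_one_pow (by simp)]
    rw [lucas_three_mul, lucas_eq_two_mul_fib_succ_sub_fib, ← hcassini] at ih
    rw [lucas_three_mul, lucas_eq_two_mul_fib_succ_sub_fib, hfib, pow_succ _ (n + 1), ← hcassini]
    rw [← hcassini] at hsign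
    refine mul_left_cancel₀ (Nat.cast_ne_zero.mpr hx : (Nat.fib (n + 1) : ℝ) ≠ 0) ?_
    push_cast
    linear_combination 1500 * hrec - Nat.fib (n + 2) * ih + 75 / 2 * hsign

/-- Closed-form expression for the generalized Dedekind sums `s_{1,3}` and `s_{3,1}`
at consecutive Fibonacci numbers. -/
theorem dedekind_sum_13_closed_form (n : ℕ) (hn : 2 ≤ n) :
    dedekindSum B1 B3 1 (Nat.fib (n - 1)) (Nat.fib n)
        = (-1 : ℝ) ^ n * dedekindSum B3 B1 1 (Nat.fib (n - 1)) (Nat.fib n) ∧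
      dedekindSum B1 B3 1 (Nat.fib (n - 1)) (Nat.fib n)
        = (lucas (3 * n) : ℝ) / (1500 * (Nat.fib n : ℝ) ^ 3)
          + (-1 : ℝ) ^ n * n / (50 * (Nat.fib n : ℝ) ^ 2)
          - (-1 : ℝ) ^ n * 13 * (lucas n : ℝ) / (750 * (Nat.fib n : ℝ) ^ 3) := by
  obtain ⟨m, rfl⟩ := Nat.exists_eq_add_of_le' (Nat.one_le_of_lt hn)
  refine ⟨dedekindSum_fib_swap B1 B3_fract_neg m, ?_⟩
  have hfib : (Nat.fib (m + 1) : ℝ) ≠ 0 := by simp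
  have hclosed := eq_div_of_mul_eq (by positivity)
    ((mul_comm _ _).trans (dedekindSum_B1_B3_fib m))
  rw [Nat.add_sub_cancel, hclosed]
  push_cast
  field_simp
  ring
end

section
/- For every positive integer N the following hold: (i) φ⌊φN⌋ < ⌊φ²N⌋; (ii) ⌊φ²N⌋ = ⌊φ⌊φN⌋ + φ^{−1}⌋; (iii) N + ⌊φN + φ^{−1}⌋ = ⌊φ⌊φN + φ^{−1}⌋ + φ^{−1}⌋; (iv) (1/2)⌊φ(2N−1) + φ^{−1}⌋ < ⌊φN + φ^{−1}⌋ < (1/2)⌊φ(2N+1) + φ^{−1}⌋. -/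
open Real

/-!
Since `φ = 1 + φ⁻¹`, multiplying an integer part by `φ` gives
`φ * ⌊φ * x + c⌋ = x + ⌊φ * x + c⌋ + φ⁻¹ * (c - fract (φ * x + c))`. For an integer `x` the first
two terms on the right form an integer, and the last one is a small correction; with `c = 0` and
`c = φ⁻¹` this yields (i)–(iii), where the irrationality of `φ` makes the fractional part positive
in (i) and (iii). The two halves of (iv) come from
`φ * (2 * x - 1) + φ⁻¹ ≤ 2 * (φ * x + φ⁻¹) - 2`, a consequence of `1 / 2 < φ⁻¹`, and
`φ * (2 * x + 1) + φ⁻¹ = 2 * (φ * x + φ⁻¹) + 1`.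
-/

open scoped goldenRatio

section FloorDoubling

variable {R : Type*} [Ring R] [LinearOrder R] [IsStrictOrderedRing R] [FloorRing R] {x y : R}

theorem floor_lt_two_mul_floor (h : x ≤ 2 * y - 2) : ⌊x⌋ < 2 * ⌊y⌋ := by
  rw [Int.floor_lt, Int.cast_mul, Int.cast_ofNat]
  calc
    x ≤ 2 * (y - 1) := by rwa [mul_sub, mul_one]
    _ < 2 * ⌊y⌋ := mul_lt_mul_of_pos_left (Int.sub_one_lt_floor y) two_pos

theorem two_mul_floor_lt_floor (h : 2 * x + 1 ≤ y) : 2 * ⌊x⌋ < ⌊y⌋ := by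
  rw [← Int.add_one_le_iff, Int.le_floor]
  push_cast
  calc
    2 * (⌊x⌋ : R) + 1 ≤ 2 * x + 1 := by
      gcongr
      exact Int.floor_le x
    _ ≤ y := h

end FloorDoubling

theorem fract_pos_of_irrational {x : ℝ} (hx : Irrational x) : 0 < Int.fract x :=
  Int.fract_pos.2 (hx.ne_int _)

theorem inv_goldenRatio_eq_sub_one : φ⁻¹ = φ - 1 := by
  rw [inv_goldenRatio, ← one_sub_goldenConj]
  ring

theorem one_half_lt_inv_goldenRatio : 1 / 2 < φ⁻¹ := by
  rw [one_div]
  exact inv_strictAnti₀ goldenRatio_pos goldenRatio_lt_two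

theorem irrational_goldenRatio_mul_intCast_add_inv {n : ℤ} (hn : n ≠ -1) :
    Irrational (φ * n + φ⁻¹) := by
  have shift : φ * n + φ⁻¹ = φ * (n + 1 : ℤ) - (1 : ℤ) := by
    rw [inv_goldenRatio_eq_sub_one]
    push_cast
    ring
  rw [shift]
  exact (goldenRatio_irrational.mul_intCast (by lia)).sub_intCast 1

theorem floor_goldenRatio_sq_mul_intCast (n : ℤ) : ⌊φ ^ 2 * n⌋ = n + ⌊φ * n⌋ := by
  rw [goldenRatio_sq, add_one_mul, Int.floor_add_intCast, add_comm]

theorem goldenRatio_mul_floor (x c : ℝ) :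
    φ * ⌊φ * x + c⌋ = x + ⌊φ * x + c⌋ + φ⁻¹ * (c - Int.fract (φ * x + c)) := by
  have self_similar : φ = 1 + φ⁻¹ := by rw [inv_goldenRatio_eq_sub_one]; ring
  calc
    φ * ⌊φ * x + c⌋ = ⌊φ * x + c⌋ + φ⁻¹ * ⌊φ * x + c⌋ := by
      nth_rw 1 [self_similar]
      ring
    _ = ⌊φ * x + c⌋ + φ⁻¹ * (φ * x + c - Int.fract (φ * x + c)) := by
      rw [Int.self_sub_fract]
    _ = x + ⌊φ * x + c⌋ + φ⁻¹ * (c - Int.fract (φ * x + c)) := by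
      rw [add_sub_assoc, mul_add, inv_mul_cancel_left₀ goldenRatio_ne_zero]
      ring

theorem goldenRatio_mul_floor_lt {n : ℤ} (hn : n ≠ 0) : φ * ⌊φ * n⌋ < ⌊φ ^ 2 * n⌋ := by
  have expansion := goldenRatio_mul_floor n 0
  rw [add_zero, zero_sub] at expansion
  have correction_pos : 0 < φ⁻¹ * Int.fract (φ * n) :=
    mul_pos (inv_pos.2 goldenRatio_pos)
      (fract_pos_of_irrational (goldenRatio_irrational.mul_intCast hn))
  rw [expansion, floor_goldenRatio_sq_mul_intCast]
  push_cast
  linarith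

theorem floor_goldenRatio_mul_floor_add_inv {n : ℤ} {c : ℝ} (hc : 0 ≤ c)
    (hfract : c < φ⁻¹ + Int.fract (φ * n + c)) :
    ⌊φ * ⌊φ * n + c⌋ + φ⁻¹⌋ = n + ⌊φ * n + c⌋ := by
  set δ := Int.fract (φ * n + c)
  have decomposition : φ * ⌊φ * n + c⌋ + φ⁻¹ = (n + ⌊φ * n + c⌋ : ℤ) + φ⁻¹ * (c + 1 - δ) := by
    rw [goldenRatio_mul_floor]
    push_cast
    ring
  have remainder_nonneg : 0 ≤ φ⁻¹ * (c + 1 - δ) :=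
    mul_nonneg (inv_pos.2 goldenRatio_pos).le (by linarith [Int.fract_lt_one (φ * n + c)])
  have remainder_lt_one : φ⁻¹ * (c + 1 - δ) < 1 := by
    rw [inv_mul_lt_one₀ goldenRatio_pos]
    linarith [inv_goldenRatio_eq_sub_one]
  rw [decomposition, Int.floor_intCast_add,
    Int.floor_eq_zero_iff.2 ⟨remainder_nonneg, remainder_lt_one⟩, add_zero]

theorem floor_goldenRatio_sq_mul_eq_floor (n : ℤ) :
    ⌊φ ^ 2 * n⌋ = ⌊φ * ⌊φ * n⌋ + φ⁻¹⌋ := by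
  have fract_bound : 0 < φ⁻¹ + Int.fract (φ * n + 0) :=
    add_pos_of_pos_of_nonneg (inv_pos.2 goldenRatio_pos) (Int.fract_nonneg _)
  rw [floor_goldenRatio_sq_mul_intCast]
  simpa only [add_zero] using (floor_goldenRatio_mul_floor_add_inv le_rfl fract_bound).symm

theorem add_floor_goldenRatio_mul_add_inv {n : ℤ} (hn : n ≠ -1) :
    n + ⌊φ * n + φ⁻¹⌋ = ⌊φ * ⌊φ * n + φ⁻¹⌋ + φ⁻¹⌋ :=
  (floor_goldenRatio_mul_floor_add_inv (inv_pos.2 goldenRatio_pos).le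
    (lt_add_of_pos_right _
      (fract_pos_of_irrational (irrational_goldenRatio_mul_intCast_add_inv hn)))).symm

theorem floor_goldenRatio_mul_two_mul_sub_one_lt (x : ℝ) :
    ⌊φ * (2 * x - 1) + φ⁻¹⌋ < 2 * ⌊φ * x + φ⁻¹⌋ :=
  floor_lt_two_mul_floor
    (by linarith [inv_goldenRatio_eq_sub_one, one_half_lt_inv_goldenRatio])

theorem lt_floor_goldenRatio_mul_two_mul_add_one (x : ℝ) :
    2 * ⌊φ * x + φ⁻¹⌋ < ⌊φ * (2 * x + 1) + φ⁻¹⌋ :=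
  two_mul_floor_lt_floor (by linarith [inv_goldenRatio_eq_sub_one])

theorem golden_floor_identities_general {n : ℤ} (hn₀ : n ≠ 0) (hn₁ : n ≠ -1) :
    phi * ⌊phi * n⌋ < ⌊phi ^ 2 * n⌋ ∧
      ⌊phi ^ 2 * n⌋ = ⌊phi * ⌊phi * n⌋ + phi⁻¹⌋ ∧
      n + ⌊phi * n + phi⁻¹⌋ = ⌊phi * ⌊phi * n + phi⁻¹⌋ + phi⁻¹⌋ ∧
      (1 / 2 : ℝ) * ⌊phi * (2 * n - 1) + phi⁻¹⌋ < ⌊phi * n + phi⁻¹⌋ ∧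
      ⌊phi * n + phi⁻¹⌋ < (1 / 2 : ℝ) * ⌊phi * (2 * n + 1) + phi⁻¹⌋ := by
  rw [show phi = φ from rfl]
  refine ⟨goldenRatio_mul_floor_lt hn₀, floor_goldenRatio_sq_mul_eq_floor n,
    add_floor_goldenRatio_mul_add_inv hn₁, ?_, ?_⟩
  · rw [one_div, inv_mul_lt_iff₀ two_pos]
    exact_mod_cast floor_goldenRatio_mul_two_mul_sub_one_lt n
  · rw [one_div, lt_inv_mul_iff₀ two_pos]
    exact_mod_cast lt_floor_goldenRatio_mul_two_mul_add_one n

/-- Floor function identities and inequalities for the golden ratio. -/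
theorem golden_floor_identities (N : ℕ) (hN : 0 < N) :
    phi * (⌊phi * (N : ℝ)⌋ : ℝ) < (⌊phi ^ 2 * (N : ℝ)⌋ : ℝ) ∧
      ⌊phi ^ 2 * (N : ℝ)⌋ = ⌊phi * (⌊phi * (N : ℝ)⌋ : ℝ) + phi⁻¹⌋ ∧
      (N : ℤ) + ⌊phi * (N : ℝ) + phi⁻¹⌋
        = ⌊phi * (⌊phi * (N : ℝ) + phi⁻¹⌋ : ℝ) + phi⁻¹⌋ ∧
      (1 / 2 : ℝ) * (⌊phi * (2 * (N : ℝ) - 1) + phi⁻¹⌋ : ℝ)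
        < (⌊phi * (N : ℝ) + phi⁻¹⌋ : ℝ) ∧
      (⌊phi * (N : ℝ) + phi⁻¹⌋ : ℝ)
        < (1 / 2 : ℝ) * (⌊phi * (2 * (N : ℝ) + 1) + phi⁻¹⌋ : ℝ) := by
  simpa only [Int.cast_natCast] using
    golden_floor_identities_general (n := N) (by lia) (by lia)
end
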